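/- arXiv:1309.3675 — 3 statements merged into one kernel-verified Lean document; each statement's English description precedes it below -/
import Mathlib

section
/- Let η₁, η₃ ∈ [0,1] and η₂ ≥ 0 be real numbers. Define z^m := min(η₂, 1) and z^b := min(η₁ + η₂ + η₃, 1) − z^m. Then (η₁ + η₃ − η₁·η₃) · exp(−z^m) + 1 − exp(−z^m) ≥ (2/e)·z^b + (3/(2e))·z^m. -/
/-!
Put `m = z^m`, `b = z^b`. The left-hand side is `1 - (1 - η₁) (1 - η₃) exp (-m)`, and
`(1 - η₁) (1 - η₃) ≤ (1 - b / 2) ^ 2` by AM-GM and `b ≤ η₁ + η₃`. So it suffices that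
`exp (-m) (1 - b / 2) ^ 2 + (2 b + 3 m / 2) / e ≤ 1` on the triangle `0 ≤ m`, `0 ≤ b`,
`m + b ≤ 1`. The left side is convex in `b`, which leaves the edges `b = 0` and `b = 1 - m`.
On the first, the chord of `exp` over `[-1, 0]` is enough; the second is nearly tight around
`m = 1 / 4` and follows from `1 + m + m ^ 2 / 2 ≤ exp m`.
-/

open Real Set

theorem min_add_sub_min_le {α : Type*} [AddCommGroup α] [LinearOrder α] [IsOrderedAddMonoid α]
    {a : α} (ha : 0 ≤ a) (x y : α) : min (a + x) y - min x y ≤ a := by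
  rw [sub_le_iff_le_add, ← min_add_add_left]
  exact min_le_min_left _ (le_add_of_nonneg_left ha)

theorem one_sub_mul_one_sub_le_sq {x y b : ℝ} (hb : b ≤ x + y) (hb' : x + y ≤ 4 - b) :
    (1 - x) * (1 - y) ≤ (1 - b / 2) ^ 2 := by
  have am_gm : (1 - x) * (1 - y) ≤ (1 - (x + y) / 2) ^ 2 := by
    linarith [four_mul_le_sq_add (1 - x) (1 - y)]
  exact am_gm.trans (sq_le_sq' (by linarith) (by linarith))

theorem exp_neg_le_chord {m : ℝ} (hm : m ∈ Icc (0 : ℝ) 1) :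
    exp (-m) ≤ 1 - m + m * exp (-1) := by
  simpa using convexOn_exp.2 (mem_univ 0) (mem_univ (-1)) (sub_nonneg.2 hm.2) hm.1
    (sub_add_cancel 1 m)

theorem exp_neg_add_mul_exp_neg_one_le_one {m : ℝ} (hm : m ∈ Icc (0 : ℝ) 1) :
    exp (-m) + 3 / 2 * m * exp (-1) ≤ 1 := by
  have five_halves_mul_le : 5 / 2 * exp (-1) ≤ 1 := by linarith [exp_neg_one_lt_d9]
  linarith [exp_neg_le_chord hm, mul_le_mul_of_nonneg_left five_halves_mul_le hm.1]

theorem exp_neg_mul_sq_add_mul_exp_neg_one_le_one {m : ℝ} (hm : m ∈ Icc (0 : ℝ) 1) :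
    exp (-m) * ((1 + m) / 2) ^ 2 + (2 - m / 2) * exp (-1) ≤ 1 := by
  obtain ⟨hm₀, hm₁⟩ := hm
  have linear_le : (2 - m / 2) * exp (-1) ≤ (2 - m / 2) * (7 / 19) :=
    mul_le_mul_of_nonneg_left (by linarith [exp_neg_one_lt_d9]) (by linarith)
  -- `7 / 19` is a rational upper bound for `1 / e` at which the gap is visibly positive.
  have gap : (1 + m + m ^ 2 / 2) * (1 - (2 - m / 2) * (7 / 19)) - ((1 + m) / 2) ^ 2 =
      ((1 - 2 * m) ^ 2 + m ^ 2 + 7 * m ^ 3) / 76 := by ring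
  have sq_le : ((1 + m) / 2) ^ 2 ≤ exp m * (1 - (2 - m / 2) * (7 / 19)) :=
    calc ((1 + m) / 2) ^ 2 ≤ (1 + m + m ^ 2 / 2) * (1 - (2 - m / 2) * (7 / 19)) := by
          rw [← sub_nonneg, gap]
          positivity
      _ ≤ exp m * (1 - (2 - m / 2) * (7 / 19)) :=
        mul_le_mul_of_nonneg_right (quadratic_le_exp_of_nonneg hm₀) (by linarith)
  have exp_neg_mul_sq_le : exp (-m) * ((1 + m) / 2) ^ 2 ≤ 1 - (2 - m / 2) * (7 / 19) := by
    rwa [exp_neg, inv_mul_le_iff₀ (exp_pos m)]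
  linarith

theorem convexOn_quadratic {a : ℝ} (ha : 0 ≤ a) (p q : ℝ) :
    ConvexOn ℝ univ fun x : ℝ ↦ a * x ^ 2 + p * x + q := by
  refine ⟨convex_univ, fun x _ y _ s t hs ht hst ↦ ?_⟩
  obtain rfl : t = 1 - s := by linarith
  simp only [smul_eq_mul]
  have convexity_defect : 0 ≤ a * (s * (1 - s)) * (x - y) ^ 2 := by positivity
  linarith

theorem exp_neg_mul_sq_one_sub_half_add_le_one {m b : ℝ} (hm : 0 ≤ m) (hb : 0 ≤ b)
    (hmb : m + b ≤ 1) :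
    exp (-m) * (1 - b / 2) ^ 2 + (2 * b + 3 / 2 * m) * exp (-1) ≤ 1 := by
  have hm' : m ∈ Icc (0 : ℝ) 1 := ⟨hm, by linarith⟩
  have hb' : b ∈ Icc 0 (1 - m) := ⟨hb, by linarith⟩
  have convex : ConvexOn ℝ univ fun b : ℝ ↦
      exp (-m) * (1 - b / 2) ^ 2 + (2 * b + 3 / 2 * m) * exp (-1) := by
    convert convexOn_quadratic (a := exp (-m) / 4) (by positivity)
      (2 * exp (-1) - exp (-m)) (exp (-m) + 3 / 2 * m * exp (-1)) using 2
    ring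
  refine (convex.le_max_of_mem_Icc (mem_univ 0) (mem_univ (1 - m)) hb').trans (max_le ?_ ?_)
  · linarith [exp_neg_add_mul_exp_neg_one_le_one hm']
  · linarith [exp_neg_mul_sq_add_mul_exp_neg_one_le_one hm']

theorem stmt_1_general (η₁ η₂ η₃ : ℝ) (h₁₃ : η₁ + η₃ ∈ Icc (0 : ℝ) 3) (h₂ : 0 ≤ η₂)
    (zm zb : ℝ) (hzm : zm = min η₂ 1) (hzb : zb = min (η₁ + η₂ + η₃) 1 - zm) :
    (η₁ + η₃ - η₁ * η₃) * exp (-zm) + 1 - exp (-zm) ≥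
      (2 / exp 1) * zb + (3 / (2 * exp 1)) * zm := by
  rw [add_right_comm] at hzb
  have zm_nonneg : 0 ≤ zm := hzm ▸ le_min h₂ zero_le_one
  have zb_nonneg : 0 ≤ zb := by
    rw [hzb, hzm, sub_nonneg]
    exact min_le_min_right _ (le_add_of_nonneg_left h₁₃.1)
  have zm_add_zb_le : zm + zb ≤ 1 := by linarith [min_le_right (η₁ + η₃ + η₂) 1]
  have zb_le : zb ≤ η₁ + η₃ := by
    rw [hzb, hzm]
    exact min_add_sub_min_le h₁₃.1 η₂ 1
  have prod_le : (1 - η₁) * (1 - η₃) ≤ (1 - zb / 2) ^ 2 :=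
    one_sub_mul_one_sub_le_sq zb_le (by linarith [h₁₃.2])
  calc (2 / exp 1) * zb + (3 / (2 * exp 1)) * zm
      = (2 * zb + 3 / 2 * zm) * exp (-1) := by rw [exp_neg]; field_simp
    _ ≤ 1 - exp (-zm) * (1 - zb / 2) ^ 2 := by
      linarith [exp_neg_mul_sq_one_sub_half_add_le_one zm_nonneg zb_nonneg zm_add_zb_le]
    _ ≤ 1 - exp (-zm) * ((1 - η₁) * (1 - η₃)) := by gcongr
    _ = (η₁ + η₃ - η₁ * η₃) * exp (-zm) + 1 - exp (-zm) := by ring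

theorem stmt_1 (η₁ η₂ η₃ : ℝ) (h₁ : η₁ ∈ Set.Icc (0:ℝ) 1) (h₃ : η₃ ∈ Set.Icc (0:ℝ) 1)
    (h₂ : 0 ≤ η₂) (zm zb : ℝ) (hzm : zm = min η₂ 1)
    (hzb : zb = min (η₁ + η₂ + η₃) 1 - zm) :
    (η₁ + η₃ - η₁ * η₃) * Real.exp (-zm) + 1 - Real.exp (-zm) ≥
      (2 / Real.exp 1) * zb + (3 / (2 * Real.exp 1)) * zm :=
  stmt_1_general η₁ η₂ η₃ ⟨add_nonneg h₁.1 h₃.1, by linarith [h₁.2, h₃.2]⟩ h₂ zm zb hzm hzb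
end

section
/- Let n, k ∈ ℕ and let a, b : Fin n → ℤ with a i ≤ b i for every i, defining closed integer intervals [a i, b i]. Suppose that for every x ∈ ℤ, the number of indices i with a i ≤ x ≤ b i is at most k. Then there exists a coloring c : Fin n → Fin k such that whenever i ≠ j and c i = c j, the intervals [a i, b i] and [a j, b j] are disjoint. -/
/-!
Among finitely many intervals take `[a i, b i]` with the largest left endpoint. Every other interval
meeting it contains the point `a i`, so there are fewer than `k` of them. Hence the intersection
graph is `(k - 1)`-degenerate and can be colored greedily with `k` colors; the theorem of
de Bruijn and Erdős extends this to infinite families.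
-/

open Set

section Degenerate

variable {V : Type*} {G : SimpleGraph V} {k : ℕ}

theorem colorable_induce_insert {s : Set V} {v : V} (hs : (G.induce s).Colorable k)
    (hv : (G.neighborSet v ∩ s).encard < k) : (G.induce (insert v s)).Colorable k := by
  classical
  obtain ⟨C⟩ := hs
  let usedColors : Set (Fin k) := C '' {w | G.Adj v w}
  have usedColors_ne_univ : usedColors ≠ univ := by
    refine fun h ↦ hv.not_ge ?_
    calc (k : ℕ∞) = usedColors.encard := by simp [h]
      _ ≤ {w : s | G.Adj v w}.encard := encard_image_le _ _
      _ = (G.neighborSet v ∩ s).encard := by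
        rw [← Subtype.val_injective.encard_image, inter_comm, ← Subtype.image_preimage_coe]
        rfl
  obtain ⟨q, hq⟩ := (ne_univ_iff_exists_notMem _).1 usedColors_ne_univ
  have q_ne {w : V} (hw : w ∈ s) (hvw : G.Adj v w) : C ⟨w, hw⟩ ≠ q :=
    fun h ↦ hq ⟨⟨w, hw⟩, hvw, h⟩
  refine ⟨.mk (fun w ↦ if hw : (w : V) ∈ s then C ⟨w, hw⟩ else q) ?_⟩
  rintro ⟨x, hx⟩ ⟨y, hy⟩ (hxy : G.Adj x y)
  by_cases hxs : x ∈ s <;> by_cases hys : y ∈ s <;> simp only [hxs, hys, dite_true, dite_false]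
  · exact C.valid hxy
  · obtain rfl := hy.resolve_right hys
    exact q_ne hxs hxy.symm
  · obtain rfl := hx.resolve_right hxs
    exact (q_ne hys hxy).symm
  · exact absurd ((hx.resolve_right hxs).trans (hy.resolve_right hys).symm) hxy.ne

theorem colorable_induce_finset_of_degenerate
    (hG : ∀ s : Finset V, s.Nonempty → ∃ v ∈ s, (G.neighborSet v ∩ s).encard < k)
    (s : Finset V) : (G.induce (s : Set V)).Colorable k := by
  classical
  induction s using Finset.strongInduction with
  | H s ih =>
    obtain rfl | hs := s.eq_empty_or_nonempty
    · have : IsEmpty ((∅ : Finset V) : Set V) := by simp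
      exact .of_isEmpty k
    obtain ⟨v, hvs, hv⟩ := hG s hs
    have hv_erase : (G.neighborSet v ∩ (s.erase v : Finset V)).encard < k :=
      (encard_le_encard (inter_subset_inter_right _ (s.erase_subset v))).trans_lt hv
    have := colorable_induce_insert (ih _ (Finset.erase_ssubset hvs)) hv_erase
    rwa [← Finset.coe_insert, Finset.insert_erase hvs] at this

theorem colorable_of_forall_finset_colorable_induce
    (hG : ∀ s : Finset V, (G.induce (s : Set V)).Colorable k) : G.Colorable k := by
  refine SimpleGraph.nonempty_hom_of_forall_finite_subgraph_hom fun G' hG' ↦ ?_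
  let C := (hG hG'.toFinset).some
  exact ⟨fun v ↦ C ⟨v, by simp⟩, fun h ↦ C.map_rel h.adj_sub⟩

theorem colorable_of_degenerate
    (hG : ∀ s : Finset V, s.Nonempty → ∃ v ∈ s, (G.neighborSet v ∩ s).encard < k) :
    G.Colorable k :=
  colorable_of_forall_finset_colorable_induce (colorable_induce_finset_of_degenerate hG)

end Degenerate

section IntervalGraph

variable {ι α : Type*} [LinearOrder α] {a b : ι → α} {i j : ι} {k : ℕ}

/-- The intersection graph of the closed intervals `[a i, b i]`: distinct indices are adjacent when
their intervals meet. -/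
def intervalGraph (a b : ι → α) : SimpleGraph ι where
  Adj i j := i ≠ j ∧ (Icc (a i) (b i) ∩ Icc (a j) (b j)).Nonempty
  symm := ⟨fun _ _ h ↦ ⟨h.1.symm, inter_comm _ _ ▸ h.2⟩⟩
  loopless := ⟨fun _ h ↦ h.1 rfl⟩

theorem left_mem_Icc_of_intervalGraph_adj (hij : (intervalGraph a b).Adj i j) (hji : a j ≤ a i) :
    a i ∈ Icc (a j) (b j) := by
  obtain ⟨-, x, hxi, hxj⟩ := hij
  exact ⟨hji, hxi.1.trans hxj.2⟩

theorem encard_neighborSet_intervalGraph_inter_lt (hi : a i ≤ b i)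
    (hcov : {j | a j ≤ a i ∧ a i ≤ b j}.encard ≤ k) {s : Finset ι} (hmax : ∀ j ∈ s, a j ≤ a i) :
    ((intervalGraph a b).neighborSet i ∩ s).encard < k := by
  have hsub : (intervalGraph a b).neighborSet i ∩ s ⊂ {j | a j ≤ a i ∧ a i ≤ b j} :=
    (ssubset_iff_of_subset fun j hj ↦ left_mem_Icc_of_intervalGraph_adj hj.1 (hmax j hj.2)).2
      ⟨i, ⟨le_rfl, hi⟩, fun h ↦ (intervalGraph a b).irrefl h.1⟩
  exact ((s.finite_toSet.inter_of_right _).encard_lt_encard hsub).trans_le hcov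

theorem intervalGraph_colorable (hab : ∀ i, a i ≤ b i)
    (hcov : ∀ x, {i | a i ≤ x ∧ x ≤ b i}.encard ≤ k) : (intervalGraph a b).Colorable k := by
  refine colorable_of_degenerate fun s hs ↦ ?_
  obtain ⟨i, his, hmax⟩ := s.exists_max_image a hs
  exact ⟨i, his, encard_neighborSet_intervalGraph_inter_lt (hab i) (hcov (a i)) hmax⟩

end IntervalGraph

theorem stmt_14_general {ι α : Type*} [LinearOrder α] (k : ℕ) (a b : ι → α) (hab : ∀ i, a i ≤ b i)
    (hcov : ∀ x : α, {i | a i ≤ x ∧ x ≤ b i}.encard ≤ k) :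
    ∃ c : ι → Fin k, ∀ i j : ι, i ≠ j → c i = c j →
      Icc (a i) (b i) ∩ Icc (a j) (b j) = ∅ := by
  obtain ⟨C⟩ := intervalGraph_colorable hab hcov
  exact ⟨C, fun i j hij hc ↦ not_nonempty_iff_eq_empty.1 fun h ↦ C.valid ⟨hij, h⟩ hc⟩

theorem stmt_14 (n k : ℕ) (a b : Fin n → ℤ) (hab : ∀ i, a i ≤ b i)
    (hcov : ∀ x : ℤ, (Finset.univ.filter (fun i : Fin n => a i ≤ x ∧ x ≤ b i)).card ≤ k) :
    ∃ c : Fin n → Fin k, ∀ i j : Fin n, i ≠ j → c i = c j →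
      Set.Icc (a i) (b i) ∩ Set.Icc (a j) (b j) = ∅ :=
  stmt_14_general k a b hab fun x ↦ by
    simpa [← encard_coe_eq_coe_finsetCard] using Nat.cast_le (α := ℕ∞).2 (hcov x)
end

section
/- Consider a broadcast scheduling instance in which at least one request has release time 0, and let t₂ be the least natural number t such that the number of requests ρ with r_ρ ≤ t is at most t + 1 (such t exists since R is finite). Let σ be a schedule satisfying, for every time t ≥ 1: if σ t = some p then some request for page p is outstanding at time t, and if σ t = none then no request is outstanding at time t. Then every request ρ with r_ρ ≤ t₂ is completed under σ at some time t ≤ t₂ + 1. -/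
/-- Request `ρ` is completed at time `t` under schedule `σ`. -/
def CompletedAt {P R : Type*} (rel : R → ℕ) (page : R → P) (σ : ℕ → Option P)
    (ρ : R) (t : ℕ) : Prop :=
  rel ρ < t ∧ σ t = some (page ρ) ∧ ∀ t', rel ρ < t' → t' < t → σ t' ≠ some (page ρ)

/-- Request `ρ` is outstanding at time `t`: it has been released before `t` and has not
been completed at any time `t' < t`. -/
def Outstanding {P R : Type*} (rel : R → ℕ) (page : R → P) (σ : ℕ → Option P)
    (ρ : R) (t : ℕ) : Prop :=
  rel ρ < t ∧ ∀ t', t' < t → ¬ CompletedAt rel page σ ρ t'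

/-!
Write `T` for `t₂` and let `s ≤ T + 1` be the last time at which no request is outstanding (`0` is
one such time). Requests released before `s` are already completed. Every later step up to `T + 1`
is busy, so it completes a request released in `[s, T]`, and different steps complete different
requests. If `s ≤ T`, then at least `s` requests are released before `s` by minimality of `T`, and
at most `T + 1` are released up to `T`, so at most `T + 1 - s` are released in `[s, T]`: the
`T + 1 - s` busy steps complete all of them.
-/

section Schedule

variable {P R : Type*} {rel : R → ℕ} {page : R → P} {σ : ℕ → Option P} {ρ : R} {s t t' : ℕ}

theorem CompletedAt.time_unique (h : CompletedAt rel page σ ρ t)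
    (h' : CompletedAt rel page σ ρ t') : t = t' := by
  rcases lt_trichotomy t t' with hlt | heq | hgt
  · exact absurd h.2.1 (h'.2.2 t h.1 hlt)
  · exact heq
  · exact absurd h'.2.1 (h.2.2 t' h'.1 hgt)

theorem exists_completedAt_le (hrel : rel ρ < t) (hσ : σ t = some (page ρ)) :
    ∃ u ≤ t, CompletedAt rel page σ ρ u := by
  classical
  have hex : ∃ u, rel ρ < u ∧ σ u = some (page ρ) := ⟨t, hrel, hσ⟩
  obtain ⟨hfind_rel, hfind_σ⟩ := Nat.find_spec hex
  exact ⟨Nat.find hex, Nat.find_min' hex ⟨hrel, hσ⟩, hfind_rel, hfind_σ,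
    fun u hu hlt heq => Nat.find_min hex hlt ⟨hu, heq⟩⟩

theorem Outstanding.completedAt (h : Outstanding rel page σ ρ t) (hσ : σ t = some (page ρ)) :
    CompletedAt rel page σ ρ t := by
  obtain ⟨u, hut, hu⟩ := exists_completedAt_le h.1 hσ
  obtain hlt | rfl := hut.lt_or_eq
  · exact absurd hu (h.2 u hlt)
  · exact hu

theorem Outstanding.of_le (h : Outstanding rel page σ ρ t) (hrel : rel ρ < s) (hst : s ≤ t) :
    Outstanding rel page σ ρ s :=
  ⟨hrel, fun u hu => h.2 u (hu.trans_le hst)⟩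

variable (rel page σ) in
/-- No request is outstanding at time `t`, that is, every request released before `t` has been
completed before `t`. Such times delimit the busy periods of the schedule. -/
def Cleared (t : ℕ) : Prop :=
  ∀ ρ, ¬ Outstanding rel page σ ρ t

theorem cleared_zero : Cleared rel page σ 0 :=
  fun ρ h => Nat.not_lt_zero (rel ρ) h.1

theorem Cleared.exists_completedAt_lt (h : Cleared rel page σ s) (hrel : rel ρ < s) :
    ∃ t < s, CompletedAt rel page σ ρ t := by
  by_contra! hnone
  exact h ρ ⟨hrel, hnone⟩

theorem Cleared.le_rel_of_outstanding (h : Cleared rel page σ s) (hst : s ≤ t)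
    (hout : Outstanding rel page σ ρ t) : s ≤ rel ρ := by
  by_contra! hrel
  exact h ρ (hout.of_le hrel hst)

variable (rel page σ) in
theorem exists_last_cleared_le (n : ℕ) :
    ∃ s ≤ n, Cleared rel page σ s ∧ ∀ t, s < t → t ≤ n → ¬ Cleared rel page σ t := by
  classical
  exact ⟨Nat.findGreatest (Cleared rel page σ) n, Nat.findGreatest_le n,
    Nat.findGreatest_spec (Nat.zero_le n) cleared_zero,
    fun _ => Nat.findGreatest_is_greatest⟩

theorem exists_outstanding_completedAt_of_not_cleared
    (hbusy : ∀ p, σ t = some p → ∃ ρ, page ρ = p ∧ Outstanding rel page σ ρ t)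
    (hidle : σ t = none → Cleared rel page σ t) (h : ¬ Cleared rel page σ t) :
    ∃ ρ, Outstanding rel page σ ρ t ∧ CompletedAt rel page σ ρ t := by
  obtain ⟨p, hp⟩ := Option.ne_none_iff_exists'.mp (mt hidle h)
  obtain ⟨ρ, rfl, hout⟩ := hbusy p hp
  exact ⟨ρ, hout, hout.completedAt hp⟩

theorem exists_completedAt_of_encard_le {A : Set R} {I : Finset ℕ}
    (hserve : ∀ t ∈ I, ∃ ρ ∈ A, CompletedAt rel page σ ρ t) (hcard : A.encard ≤ I.card)
    (hρ : ρ ∈ A) : ∃ t ∈ I, CompletedAt rel page σ ρ t := by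
  have : Nonempty R := ⟨ρ⟩
  choose! serve hserve_mem hserve_completed using hserve
  have hinj : Set.InjOn serve I := fun t ht u hu heq =>
    (hserve_completed t ht).time_unique (heq ▸ hserve_completed u hu)
  have hcard_image : (serve '' I).encard = I.card := by
    rw [hinj.encard_image, Set.encard_coe_eq_coe_finsetCard]
  have himage : serve '' I = A :=
    (I.finite_toSet.image serve).eq_of_subset_of_encard_le
      (Set.image_subset_iff.mpr hserve_mem) (hcard_image ▸ hcard)
  obtain ⟨t, ht, rfl⟩ := himage ▸ hρ
  exact ⟨t, ht, hserve_completed t ht⟩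

end Schedule

theorem encard_preimage_Icc_le {α : Type*} {f : α → ℕ} {a b n : ℕ} (hab : a ≤ b)
    (hlow : a ≤ (f ⁻¹' Set.Iio a).encard) (hup : (f ⁻¹' Set.Iic b).encard ≤ n) :
    (f ⁻¹' Set.Icc a b).encard ≤ (n - a : ℕ) := by
  have hdisj : Disjoint (f ⁻¹' Set.Iio a) (f ⁻¹' Set.Icc a b) :=
    Disjoint.preimage f (Set.disjoint_left.mpr fun _ hlt hmem => not_le_of_gt hlt hmem.1)
  rw [ENat.natCast_sub]
  refine ENat.le_sub_of_add_le_left (ENat.natCast_ne_top a) ?_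
  calc (a : ℕ∞) + (f ⁻¹' Set.Icc a b).encard
      ≤ (f ⁻¹' Set.Iio a).encard + (f ⁻¹' Set.Icc a b).encard := by gcongr
    _ = (f ⁻¹' Set.Iic b).encard := by
      rw [← Set.encard_union_eq hdisj, ← Set.preimage_union, Set.Iio_union_Icc_eq_Iic hab]
    _ ≤ n := hup

theorem le_encard_setOf_lt_of_isLeast {R : Type*} {rel : R → ℕ} {T s : ℕ}
    (hT : IsLeast {t : ℕ | {ρ : R | rel ρ ≤ t}.ncard ≤ t + 1} T) (hs : s ≤ T) :
    s ≤ {ρ | rel ρ < s}.encard := by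
  cases s with
  | zero => simp
  | succ t =>
    have hcount : t + 1 < {ρ : R | rel ρ ≤ t}.ncard :=
      not_le.mp fun hle => (hT.2 hle).not_gt hs
    simp only [Nat.lt_succ_iff]
    exact (Nat.cast_le.mpr hcount.le).trans (Set.ncard_le_encard _)

theorem stmt_18_general {P R : Type*} (rel : R → ℕ) (page : R → P) (T : ℕ)
    (hlow : ∀ s ≤ T, s ≤ {ρ | rel ρ < s}.encard)
    (hup : {ρ | rel ρ ≤ T}.encard ≤ (T + 1 : ℕ))
    (σ : ℕ → Option P)
    (hbusy : ∀ t, 1 ≤ t → ∀ p, σ t = some p →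
      ∃ ρ, page ρ = p ∧ Outstanding rel page σ ρ t)
    (hidle : ∀ t, 1 ≤ t → σ t = none → ∀ ρ : R, ¬ Outstanding rel page σ ρ t) :
    ∀ ρ : R, rel ρ ≤ T → ∃ t, t ≤ T + 1 ∧ CompletedAt rel page σ ρ t := by
  intro ρ hρ
  obtain ⟨s, hsT, hcleared, hlast⟩ := exists_last_cleared_le rel page σ (T + 1)
  obtain hrel | hrel := lt_or_ge (rel ρ) s
  · obtain ⟨t, hts, ht⟩ := hcleared.exists_completedAt_lt hrel
    exact ⟨t, hts.le.trans hsT, ht⟩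
  have hserve : ∀ t ∈ Finset.Ioc s (T + 1),
      ∃ ρ ∈ rel ⁻¹' Set.Icc s T, CompletedAt rel page σ ρ t := by
    intro t ht
    obtain ⟨hst, htT⟩ := Finset.mem_Ioc.mp ht
    have ht_pos : 1 ≤ t := Nat.one_le_of_lt hst
    obtain ⟨ρ', hout, hcompleted⟩ := exists_outstanding_completedAt_of_not_cleared
      (hbusy t ht_pos) (hidle t ht_pos) (hlast t hst htT)
    exact ⟨ρ', ⟨hcleared.le_rel_of_outstanding hst.le hout,
      Nat.le_of_lt_succ (hout.1.trans_le htT)⟩, hcompleted⟩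
  have hcard : (rel ⁻¹' Set.Icc s T).encard ≤ (Finset.Ioc s (T + 1)).card := by
    rw [Nat.card_Ioc]
    have hsT' : s ≤ T := hrel.trans hρ
    exact encard_preimage_Icc_le hsT' (hlow s hsT') hup
  obtain ⟨t, ht, hcompleted⟩ := exists_completedAt_of_encard_le hserve hcard ⟨hrel, hρ⟩
  exact ⟨t, (Finset.mem_Ioc.mp ht).2, hcompleted⟩

theorem stmt_18 {P R : Type*} [Fintype R]
    (rel : R → ℕ) (page : R → P)
    (h0 : ∃ ρ : R, rel ρ = 0)
    (t₂ : ℕ) (ht₂ : IsLeast {t : ℕ | {ρ : R | rel ρ ≤ t}.ncard ≤ t + 1} t₂)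
    (σ : ℕ → Option P)
    (hbusy : ∀ t, 1 ≤ t → ∀ p, σ t = some p →
      ∃ ρ, page ρ = p ∧ Outstanding rel page σ ρ t)
    (hidle : ∀ t, 1 ≤ t → σ t = none → ∀ ρ : R, ¬ Outstanding rel page σ ρ t) :
    ∀ ρ : R, rel ρ ≤ t₂ → ∃ t, t ≤ t₂ + 1 ∧ CompletedAt rel page σ ρ t :=
  stmt_18_general rel page t₂ (fun _ => le_encard_setOf_lt_of_isLeast ht₂)
    (Set.encard_le_coe_iff_finite_ncard_le.mpr ⟨Set.toFinite _, ht₂.1⟩) σ hbusy hidle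
end
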